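/- arXiv:2004.14037 — 6 statements merged into one kernel-verified Lean document; each statement's English description precedes it below -/
import Mathlib

section
/- Let β ≥ 2 be a real algebraic number. Then for every sequence (ε_n)_{n≥1} of positive real numbers there exist real numbers s and t such that the iterated function system Φ_{β,s,t} has no exact overlaps and Δ_n(β, s, t) ≤ ε_n for every n ≥ 1. -/
/-!
The maps `φ_w` satisfy `φ_w(0) = ∑ k, a (w k) / β ^ (k + 1)` with digits `a ∈ {0, 1, s, t}`, so an exact
overlap gives a relation `P + s Q + t R = 0` in which `P`, `Q`, `R` are values at `1 / β` of polynomials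
with coefficients in `{-1, 0, 1}`. Since `β ≥ 2`, such a value vanishes only if all the coefficients do
(`digits_eq_zero`). Hence there is no exact overlap once `s` avoids the countable set of quotients `-P / Q`
and `t` avoids the countable set of quotients `-(P + s Q) / R` (`no_overlaps`).

Put `c = β⁻²` and fix a very rapidly increasing sequence `m`. Take `s` to be a sum of powers `c ^ j` with
`j` in a subset of `{m 0, m 2, m 4, …}` and `t` such a sum with `j` in a subset of `{m 1, m 3, …}`. Distinct
subsets give distinct sums because `c < 1 / 2`, so there are uncountably many candidates for each of `s`
and `t`, and the two countable sets can be avoided.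

Whatever the subsets are, `Δ_n` is small: truncating the series of `x ∈ {s, t}` gives a finite sum of
powers of `β⁻¹` with digits in `{0, 1}`, and comparing the word `x 0 0 …` with the word `0 ω₁ ω₂ …` of these
digits bounds `Δ_n` by the tail of the series (`Delta_le_of_gap`). For given `n`, let `k` be least with
`n ≤ 2 m k`. The series whose exponents have index of the parity of `k + 1` has no exponent in
`[n / 2, m (k + 1))`, so its tail is at most about `c ^ m (k + 1)`, which is at most `ε n` by the choice of `m`.
-/

open Filter Polynomial

/-- The four maps of the IFS Φ_{β,s,t}: x/β, (x+1)/β, (x+s)/β, (x+t)/β. -/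
noncomputable def phiMap (β s t : ℝ) : Fin 4 → ℝ → ℝ
  | 0 => fun x => x / β
  | 1 => fun x => (x + 1) / β
  | 2 => fun x => (x + s) / β
  | 3 => fun x => (x + t) / β

/-- For a word w = i₁…iₙ, the composition φ_{i₁} ∘ ⋯ ∘ φ_{iₙ}. -/
noncomputable def phiWord (β s t : ℝ) {n : ℕ} (w : Fin n → Fin 4) : ℝ → ℝ :=
  (List.ofFn fun k => phiMap β s t (w k)).foldr (· ∘ ·) id

/-- Φ_{β,s,t} has exact overlaps: two distinct words of the same length n ≥ 1
give the same map. -/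
def HasExactOverlaps (β s t : ℝ) : Prop :=
  ∃ n : ℕ, 1 ≤ n ∧ ∃ i j : Fin n → Fin 4, i ≠ j ∧ phiWord β s t i = phiWord β s t j

/-- Δ_n(β,s,t) = min over distinct words i ≠ j of length n of |φ_i(0) − φ_j(0)|. -/
noncomputable def Delta (β s t : ℝ) (n : ℕ) : ℝ :=
  sInf {d : ℝ | ∃ i j : Fin n → Fin 4, i ≠ j ∧ d = |phiWord β s t i 0 - phiWord β s t j 0|}

/-- B_n = { Σ_{j=1}^n ω_j β^{j-1} : ω_j ∈ {0,1} }. -/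
def Bset (β : ℝ) (n : ℕ) : Set ℝ :=
  {x : ℝ | ∃ ω : Fin n → ℝ, (∀ j, ω j = 0 ∨ ω j = 1) ∧ x = ∑ j : Fin n, ω j * β ^ (j : ℕ)}

/-- The digit (translation part times `β`) of each of the four maps. -/
noncomputable def digit (s t : ℝ) : Fin 4 → ℝ := ![0, 1, s, t]

theorem phiMap_eq (β s t : ℝ) (a : Fin 4) (x : ℝ) : phiMap β s t a x = (x + digit s t a) / β := by
  fin_cases a <;> simp [phiMap, digit]

theorem phiWord_zero (β s t : ℝ) {n : ℕ} (w : Fin n → Fin 4) :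
    phiWord β s t w 0 = ∑ k : Fin n, digit s t (w k) / β ^ ((k : ℕ) + 1) := by
  induction n with
  | zero => simp [phiWord]
  | succ n ih =>
    have h : phiWord β s t w 0 = phiMap β s t (w 0) (phiWord β s t (fun k => w k.succ) 0) := by
      simp [phiWord, List.ofFn_succ]
    rw [h, ih, phiMap_eq, Fin.sum_univ_succ, add_div, Finset.sum_div, add_comm]
    congr 1
    · simp
    · refine Finset.sum_congr rfl fun k _ => ?_
      rw [div_div, ← pow_succ, Fin.val_succ]

theorem abs_digits_lt_one {β : ℝ} (hβ : 2 ≤ β) {n : ℕ} (d : Fin n → ℝ) (hd : ∀ k, |d k| ≤ 1) :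
    |∑ k : Fin n, d k / β ^ ((k : ℕ) + 1)| < 1 := by
  induction n with
  | zero => simp
  | succ n ih =>
    have h := ih (fun k => d k.succ) (fun k => hd _)
    have h0 := hd 0
    have e : ∑ k : Fin (n + 1), d k / β ^ ((k : ℕ) + 1)
        = (d 0 + ∑ k : Fin n, d k.succ / β ^ ((k : ℕ) + 1)) / β := by
      rw [Fin.sum_univ_succ, add_div, Finset.sum_div]
      congr 1
      · simp
      · refine Finset.sum_congr rfl fun k _ => ?_
        rw [div_div, ← pow_succ, Fin.val_succ]
    rw [e, abs_div, abs_of_pos (by linarith : 0 < β), div_lt_one (by linarith)]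
    linarith [abs_add_le (d 0) (∑ k : Fin n, d k.succ / β ^ ((k : ℕ) + 1))]

/-- An expansion in base `β ≥ 2` with digits in `{-1, 0, 1}` vanishes only if all its digits do: the
digits after the first nonzero one contribute too little to cancel it. -/
theorem digits_eq_zero {β : ℝ} (hβ : 2 ≤ β) {n : ℕ} (d : Fin n → ℤ) (hd : ∀ k, |d k| ≤ 1)
    (h : ∑ k : Fin n, (d k : ℝ) / β ^ ((k : ℕ) + 1) = 0) : ∀ k, d k = 0 := by
  induction n with
  | zero => exact fun k => k.elim0
  | succ n ih =>
    have e : ∑ k : Fin (n + 1), (d k : ℝ) / β ^ ((k : ℕ) + 1)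
        = (d 0 + ∑ k : Fin n, (d k.succ : ℝ) / β ^ ((k : ℕ) + 1)) / β := by
      rw [Fin.sum_univ_succ, add_div, Finset.sum_div]
      congr 1
      · simp
      · refine Finset.sum_congr rfl fun k _ => ?_
        rw [div_div, ← pow_succ, Fin.val_succ]
    rw [e, div_eq_zero_iff, or_iff_left (by linarith)] at h
    have hlt := abs_digits_lt_one hβ (fun k : Fin n => (d k.succ : ℝ))
      (fun k => by exact_mod_cast hd k.succ)
    have h0 : d 0 = 0 := by
      have : |(d 0 : ℝ)| < 1 := by
        rw [eq_neg_of_add_eq_zero_left h, abs_neg]; exact hlt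
      have : |d 0| < 1 := by exact_mod_cast this
      exact Int.abs_lt_one_iff.mp this
    refine Fin.cases h0 (ih (fun k => d k.succ) (fun k => hd _) ?_)
    simpa [h0] using h

/-- The signed indicator of the letter `a` at position `k` of a pair of words. -/
def letterDiff (a : Fin 4) {n : ℕ} (i j : Fin n → Fin 4) (k : Fin n) : ℤ :=
  (if i k = a then 1 else 0) - (if j k = a then 1 else 0)

/-- The coefficient of the digit of the letter `a` in `φ_i(0) - φ_j(0)`. -/
noncomputable def coeffDiff (β : ℝ) (a : Fin 4) {n : ℕ} (i j : Fin n → Fin 4) : ℝ :=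
  ∑ k : Fin n, (letterDiff a i j k : ℝ) / β ^ ((k : ℕ) + 1)

theorem phiWord_sub (β s t : ℝ) {n : ℕ} (i j : Fin n → Fin 4) :
    phiWord β s t i 0 - phiWord β s t j 0
      = coeffDiff β 1 i j + s * coeffDiff β 2 i j + t * coeffDiff β 3 i j := by
  have key : ∀ a b : Fin 4, digit s t a - digit s t b
      = (((if a = 1 then 1 else 0) - (if b = 1 then 1 else 0) : ℤ) : ℝ)
        + s * (((if a = 2 then 1 else 0) - (if b = 2 then 1 else 0) : ℤ) : ℝ)
        + t * (((if a = 3 then 1 else 0) - (if b = 3 then 1 else 0) : ℤ) : ℝ) := by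
    intro a b
    fin_cases a <;> fin_cases b <;> simp [digit] <;> ring
  rw [phiWord_zero, phiWord_zero, coeffDiff, coeffDiff, coeffDiff, Finset.mul_sum, Finset.mul_sum,
    ← Finset.sum_sub_distrib, ← Finset.sum_add_distrib, ← Finset.sum_add_distrib]
  refine Finset.sum_congr rfl fun k _ => ?_
  rw [← sub_div, key]
  simp only [letterDiff]
  ring

theorem letter_iff_of_coeffDiff_eq_zero {β : ℝ} (hβ : 2 ≤ β) {a : Fin 4} {n : ℕ} {i j : Fin n → Fin 4}
    (h : coeffDiff β a i j = 0) (k : Fin n) : i k = a ↔ j k = a := by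
  have := digits_eq_zero hβ (letterDiff a i j)
    (fun k => by unfold letterDiff; split_ifs <;> simp) h k
  unfold letterDiff at this
  split_ifs at this <;> simp_all

/-- Pairs of words of a common length. -/
abbrev WordPair : Type := Σ n : ℕ, (Fin n → Fin 4) × (Fin n → Fin 4)

theorem no_overlaps {β s t : ℝ} (hβ : 2 ≤ β)
    (hs : s ∉ Set.range fun p : WordPair => -coeffDiff β 1 p.2.1 p.2.2 / coeffDiff β 2 p.2.1 p.2.2)
    (ht : t ∉ Set.range fun p : WordPair =>
      -(coeffDiff β 1 p.2.1 p.2.2 + s * coeffDiff β 2 p.2.1 p.2.2) / coeffDiff β 3 p.2.1 p.2.2) :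
    ¬ HasExactOverlaps β s t := by
  rintro ⟨n, -, i, j, hij, h⟩
  have h0 : coeffDiff β 1 i j + s * coeffDiff β 2 i j + t * coeffDiff β 3 i j = 0 := by
    rw [← phiWord_sub, h, sub_self]
  have h3 : coeffDiff β 3 i j = 0 := by
    by_contra hne
    refine ht ⟨⟨n, i, j⟩, ?_⟩
    change -(coeffDiff β 1 i j + s * coeffDiff β 2 i j) / coeffDiff β 3 i j = t
    rw [div_eq_iff hne]; linarith
  rw [h3, mul_zero, add_zero] at h0
  have h2 : coeffDiff β 2 i j = 0 := by
    by_contra hne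
    refine hs ⟨⟨n, i, j⟩, ?_⟩
    change -coeffDiff β 1 i j / coeffDiff β 2 i j = s
    rw [div_eq_iff hne]; linarith
  rw [h2, mul_zero, add_zero] at h0
  apply hij
  funext k
  have k1 := letter_iff_of_coeffDiff_eq_zero hβ h0 k
  have k2 := letter_iff_of_coeffDiff_eq_zero hβ h2 k
  have k3 := letter_iff_of_coeffDiff_eq_zero hβ h3 k
  generalize i k = a at *
  generalize j k = b at *
  revert a b
  decide

/-- Comparing the word `x 0 0 …` (where `x` is the letter `a`) with `0 ω₁ ω₂ …`, where `ω` records the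
exponents `2 * l < n` of the expansion of `x` in powers of `β⁻²`: if that expansion has no further
exponent below `2 * M`, then `x` is within `2 * (β⁻²) ^ M` of the truncation,
and the leading factor `1 / β` of both words absorbs the `2`. -/
theorem Delta_le_of_gap {β s t : ℝ} (hβ : 2 ≤ β) {a : Fin 4} (ha : a ≠ 0) {f : ℕ → Bool}
    (hx : digit s t a = Cardinal.cantorFunction ((β ^ 2)⁻¹) f) (hf0 : f 0 = false) {n M : ℕ}
    (hn : 1 ≤ n) (hM : ∀ l, n ≤ 2 * l → l < M → f l = false) :
    Delta β s t n ≤ ((β ^ 2)⁻¹) ^ M := by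
  obtain ⟨n, rfl⟩ : ∃ n', n = n' + 1 := ⟨n - 1, by omega⟩
  set c : ℝ := (β ^ 2)⁻¹ with hc
  have hβ0 : 0 < β := by linarith
  have hc0 : 0 < c := by positivity
  have hc1 : c ≤ 1 / 4 := by
    rw [hc, inv_le_comm₀ (by positivity) (by norm_num)]; nlinarith
  let i : Fin (n + 1) → Fin 4 := Fin.cons a fun _ => 0
  let ω : ℕ → Fin 4 := fun l => if l % 2 = 0 ∧ f (l / 2) = true then 1 else 0
  let j : Fin (n + 1) → Fin 4 := fun k => ω k
  have hω0 : ω 0 = 0 := by simp [ω, hf0]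
  have hij : i ≠ j := by
    intro h
    apply ha
    have := congrFun h 0
    simpa [i, j, hω0] using this
  have hi : phiWord β s t i 0 = digit s t a / β := by
    rw [phiWord_zero, Fin.sum_univ_succ]
    simp [i, digit]
  let trunc : ℝ := ∑ l ∈ Finset.range (n + 1), digit s t (ω l) / β ^ l
  have hj : phiWord β s t j 0 = trunc / β := by
    rw [phiWord_zero, Finset.sum_div, ← Fin.sum_univ_eq_sum_range
      (fun l => digit s t (ω l) / β ^ l / β)]
    refine Finset.sum_congr rfl fun k _ => ?_
    rw [div_div, ← pow_succ]
  have hsum := Cardinal.summable_cantor_function f hc0.le (by linarith : c < 1)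
  -- The truncation is the partial sum of the series over the `l` with `2 * l ≤ n`.
  let L : ℕ := n / 2 + 1
  have htr : trunc = ∑ l ∈ Finset.range L, Cardinal.cantorFunctionAux c f l := by
    have hinj : Set.InjOn (fun l : ℕ => 2 * l) (Finset.range L : Set ℕ) :=
      fun x _ y _ h => by simpa using h
    have h1 : ∑ l ∈ Finset.range L, Cardinal.cantorFunctionAux c f l
        = ∑ l ∈ (Finset.range L).image (fun l => 2 * l), digit s t (ω l) / β ^ l := by
      rw [Finset.sum_image hinj]
      refine Finset.sum_congr rfl fun l _ => ?_
      cases hfl : f l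
      · simp [Cardinal.cantorFunctionAux, hfl, ω, digit]
      · simp [Cardinal.cantorFunctionAux, hfl, ω, digit, hc, pow_mul]
    rw [h1]
    symm
    apply Finset.sum_subset
    · intro l hl
      simp only [Finset.mem_image, Finset.mem_range, L] at hl ⊢
      omega
    · intro l hl hl'
      simp only [Finset.mem_image, Finset.mem_range, L] at hl hl'
      have : ω l = 0 := by
        simp only [ω]
        rw [if_neg]
        rintro ⟨h, -⟩
        exact hl' ⟨l / 2, by omega, by omega⟩
      simp [this, digit]
  have hx' : digit s t a - trunc = ∑' l, Cardinal.cantorFunctionAux c f (l + L) := by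
    rw [hx, htr, Cardinal.cantorFunction, ← hsum.sum_add_tsum_nat_add L]; ring
  have haux : ∀ l, 0 ≤ Cardinal.cantorFunctionAux c f l :=
    fun l => Cardinal.cantorFunctionAux_nonneg hc0.le
  have hnn : 0 ≤ digit s t a - trunc := by
    rw [hx']; exact tsum_nonneg fun l => haux _
  have hgeo : Summable fun l : ℕ => c ^ l := summable_geometric_of_lt_one hc0.le (by linarith)
  have hle : digit s t a - trunc ≤ 2 * c ^ M := by
    have h2 : digit s t a - trunc ≤ ∑' l : ℕ, c ^ M * c ^ l := by
      have hb : ∑ l ∈ Finset.range M, Cardinal.cantorFunctionAux c f l ≤ trunc := by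
        rw [htr]
        rw [← Finset.sum_filter_ne_zero]
        refine Finset.sum_le_sum_of_subset_of_nonneg (fun l hl => ?_) fun l _ _ => haux l
        simp only [Finset.mem_filter, Finset.mem_range] at hl ⊢
        by_contra hlt
        apply hl.2
        simp [Cardinal.cantorFunctionAux, hM l (by omega) hl.1]
      have : digit s t a - trunc ≤ ∑' l, Cardinal.cantorFunctionAux c f (l + M) := by
        rw [hx, Cardinal.cantorFunction, ← hsum.sum_add_tsum_nat_add M]; linarith
      refine this.trans (Summable.tsum_le_tsum (fun l => ?_) ((summable_nat_add_iff M).mpr hsum)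
        (hgeo.mul_left _))
      rw [← pow_add, add_comm M l]
      cases hfl : f (l + M)
      · simp [Cardinal.cantorFunctionAux, hfl]; positivity
      · simp [Cardinal.cantorFunctionAux, hfl]
    rw [tsum_mul_left, tsum_geometric_of_lt_one hc0.le (by linarith)] at h2
    have h3 : (1 - c)⁻¹ ≤ 2 := by
      rw [inv_le_comm₀ (by linarith) (by norm_num)]; linarith
    have : 0 ≤ c ^ M := by positivity
    nlinarith
  have hmem : Delta β s t (n + 1) ≤ |phiWord β s t i 0 - phiWord β s t j 0| :=
    csInf_le ⟨0, by rintro d ⟨i, j, -, rfl⟩; exact abs_nonneg _⟩ ⟨i, j, hij, rfl⟩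
  refine hmem.trans ?_
  rw [hi, hj, ← sub_div, abs_of_nonneg (by positivity), div_le_iff₀ hβ0]
  have : 0 ≤ c ^ M := by positivity
  nlinarith

/-- The indicator of `{m (2 * k + r) : h k}`, a subset of the values of `m` at indices of parity `r`. -/
noncomputable def sparse (m : ℕ → ℕ) (r : ℕ) (h : ℕ → Bool) : ℕ → Bool :=
  open Classical in fun j => decide (∃ k, j = m (2 * k + r) ∧ h k = true)

theorem sparse_injective {m : ℕ → ℕ} (hm : StrictMono m) (r : ℕ) : Function.Injective (sparse m r) := by
  have key : ∀ h k, sparse m r h (m (2 * k + r)) = h k := by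
    intro h k
    rw [Bool.eq_iff_iff]
    simp only [sparse, decide_eq_true_eq, hm.injective.eq_iff]
    constructor
    · rintro ⟨k', e, hk⟩
      obtain rfl : k = k' := by omega
      exact hk
    · exact fun hk => ⟨k, rfl, hk⟩
  intro h h' e
  funext k
  rw [← key h, e, key]

theorem exists_sparse_sum_notMem {c : ℝ} (hc0 : 0 < c) (hc : c < 1 / 2) {m : ℕ → ℕ} (hm : StrictMono m)
    (r : ℕ) {T : Set ℝ} (hT : T.Countable) : ∃ h, Cardinal.cantorFunction c (sparse m r h) ∉ T := by
  by_contra! hall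
  have hinj : Function.Injective fun h => Cardinal.cantorFunction c (sparse m r h) :=
    (Cardinal.cantorFunction_injective hc0 hc).comp (sparse_injective hm r)
  have hcount := hT.preimage hinj
  rw [Set.eq_univ_of_forall (s := _ ⁻¹' T) hall, Set.countable_univ_iff] at hcount
  have hle : Cardinal.mk (ℕ → Bool) ≤ Cardinal.aleph0 := Cardinal.mk_le_aleph0_iff.mpr hcount
  rw [← Cardinal.power_def, Cardinal.mk_bool, Cardinal.mk_nat] at hle
  exact absurd hle (not_le.mpr (Cardinal.cantor _))

theorem exists_fast_sequence {c : ℝ} (hc0 : 0 < c) (hc : c < 1) {ε : ℕ → ℝ} (hε : ∀ n, 1 ≤ n → 0 < ε n) :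
    ∃ m : ℕ → ℕ, StrictMono m ∧ 1 ≤ m 0 ∧ ∀ k n, 1 ≤ n → n ≤ 2 * m k → c ^ m (k + 1) ≤ ε n := by
  have step : ∀ N : ℕ, ∃ M, N < M ∧ ∀ n, 1 ≤ n → n ≤ 2 * N → c ^ M ≤ ε n := by
    intro N
    have h1 : ∀ n ∈ Finset.Icc 1 (2 * N), ∀ᶠ M : ℕ in atTop, c ^ M ≤ ε n := fun n hn =>
      (tendsto_pow_atTop_nhds_zero_of_lt_one hc0.le hc).eventually_le_const
        (hε n (Finset.mem_Icc.mp hn).1)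
    obtain ⟨M, h, h'⟩ := (((Finset.eventually_all _).mpr h1).and (eventually_gt_atTop N)).exists
    exact ⟨M, h', fun n a b => h n (Finset.mem_Icc.mpr ⟨a, b⟩)⟩
  choose F hF hF' using step
  refine ⟨fun k => F^[k] 1, strictMono_nat_of_lt_succ fun k => ?_, le_rfl, fun k n h1 h2 => ?_⟩
  · rw [Function.iterate_succ_apply']; exact hF _
  · change c ^ F^[k + 1] 1 ≤ ε n
    rw [Function.iterate_succ_apply']; exact hF' _ n h1 h2

theorem Delta_le_of_sparse {β s t : ℝ} (hβ : 2 ≤ β) {a : Fin 4} (ha : a ≠ 0) {m : ℕ → ℕ}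
    (hm : StrictMono m) (hm0 : 1 ≤ m 0) {r : ℕ} {h : ℕ → Bool}
    (hx : digit s t a = Cardinal.cantorFunction ((β ^ 2)⁻¹) (sparse m r h)) {k n : ℕ} (hn : 1 ≤ n)
    (hr : (k + 1) % 2 = r % 2) (hk : ∀ i < k, 2 * m i < n) :
    Delta β s t n ≤ ((β ^ 2)⁻¹) ^ m (k + 1) := by
  refine Delta_le_of_gap hβ ha hx ?_ hn ?_
  · simp only [sparse, decide_eq_false_iff_not]
    rintro ⟨k', e, -⟩
    have := hm.monotone (Nat.zero_le (2 * k' + r))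
    omega
  · intro l hl hlM
    simp only [sparse, decide_eq_false_iff_not]
    rintro ⟨k', rfl, -⟩
    have := hm.lt_iff_lt.mp hlM
    -- An index below `k + 1` of the parity of `k + 1` is below `k`.
    have := hk (2 * k' + r) (by omega)
    omega

/-- For any real algebraic β ≥ 2 and any sequence of positive reals
(ε_n), there exist s, t ∈ ℝ such that Φ_{β,s,t} has no exact overlaps and
Δ_n(β,s,t) ≤ ε_n for all n ≥ 1. -/
theorem stmt0 (β : ℝ) (hβ : 2 ≤ β) (halg : IsAlgebraic ℤ β)
    (ε : ℕ → ℝ) (hε : ∀ n, 1 ≤ n → 0 < ε n) :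
    ∃ s t : ℝ, ¬ HasExactOverlaps β s t ∧ ∀ n, 1 ≤ n → Delta β s t n ≤ ε n := by
  have hc0 : 0 < (β ^ 2)⁻¹ := by positivity
  have hc : (β ^ 2)⁻¹ < 1 / 2 := by
    rw [inv_lt_comm₀ (by positivity) (by norm_num)]; nlinarith
  obtain ⟨m, hm, hm0, hmε⟩ := exists_fast_sequence hc0 (by linarith) hε
  obtain ⟨h, hs⟩ := exists_sparse_sum_notMem hc0 hc hm 0 (Set.countable_range
    fun p : WordPair => -coeffDiff β 1 p.2.1 p.2.2 / coeffDiff β 2 p.2.1 p.2.2)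
  set s := Cardinal.cantorFunction (β ^ 2)⁻¹ (sparse m 0 h) with hs_def
  obtain ⟨h', ht⟩ := exists_sparse_sum_notMem hc0 hc hm 1 (Set.countable_range
    fun p : WordPair =>
      -(coeffDiff β 1 p.2.1 p.2.2 + s * coeffDiff β 2 p.2.1 p.2.2) / coeffDiff β 3 p.2.1 p.2.2)
  set t := Cardinal.cantorFunction (β ^ 2)⁻¹ (sparse m 1 h') with ht_def
  refine ⟨s, t, no_overlaps hβ hs ht, fun n hn => ?_⟩
  have hex : ∃ k, n ≤ 2 * m k := ⟨n, by have := hm.le_apply (x := n); omega⟩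
  classical
  have hk : ∀ i < Nat.find hex, 2 * m i < n := fun i hi => not_le.mp (Nat.find_min hex hi)
  refine le_trans ?_ (hmε (Nat.find hex) n hn (Nat.find_spec hex))
  rcases Nat.mod_two_eq_zero_or_one (Nat.find hex + 1) with hpar | hpar
  · exact Delta_le_of_sparse hβ (a := 2) (by decide) hm hm0 (r := 0) (h := h) (by simp [digit, hs_def]) hn hpar hk
  · exact Delta_le_of_sparse hβ (a := 3) (by decide) hm hm0 (r := 1) (h := h') (by simp [digit, ht_def]) hn hpar hk
end

section
/- Let β ≥ 2 be a real number and let s, t be real numbers with s ∉ ℚ_β and t ∉ ℚ_β. If the iterated function system Φ_{β,s,t} has exact overlaps, then there exist polynomials f, g, h with integer coefficients such that f(β) ≠ 0, g(β) ≠ 0, and s = (f(β)/g(β))·t + h(β)/g(β). -/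
/-!
For a word `w` of length `n`, `β ^ n * φ_w(0) = P₁(β) + P₂(β) s + P₃(β) t`, where `Pₐ` is the
polynomial with coefficients in `{0, 1}` marking the positions of the letter `a` in `w`
(`pow_mul_comp_zero`). An exact overlap of words `i ≠ j` therefore gives a relation
`D₁ + D₂ s + D₃ t = 0`, where each `Dₐ` is the value at `β` of a difference of two such polynomials.

If exactly one of `D₂`, `D₃` vanishes, then `t` or `s` lies in `ℚ_β`, which is excluded. If both
vanish, so does `D₁`; since `β ≥ 2`, a polynomial with digits in `{0, 1}` is determined by its value
at `β`, so `i = j` (`eq_of_letterPoly_eq`), a contradiction. Hence `D₂` and `D₃` are both nonzero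
and the relation can be solved for `s`.
-/

open Filter Polynomial

/-- ℚ_β = { f(β)/g(β) : f, g ∈ ℤ[X], g(β) ≠ 0 }. -/
def Qbeta (β : ℝ) : Set ℝ :=
  {x : ℝ | ∃ f g : Polynomial ℤ, aeval β g ≠ 0 ∧ x = aeval β f / aeval β g}

/-- The polynomial with coefficients in `{0, 1}` marking the positions of the letter `a` in the
word `l`, the first letter of `l` having the highest power of `X`. -/
noncomputable def letterPoly (a : Fin 4) : List (Fin 4) → ℤ[X]
  | [] => 0
  | i :: l => (if i = a then X ^ l.length else 0) + letterPoly a l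

lemma letterPoly_bounds {β : ℝ} (hβ : 2 ≤ β) (a : Fin 4) (l : List (Fin 4)) :
    0 ≤ aeval β (letterPoly a l) ∧ aeval β (letterPoly a l) ≤ β ^ l.length - 1 := by
  induction l with
  | nil => simp [letterPoly]
  | cons i l ih =>
    obtain ⟨h0, h1⟩ := ih
    have hp : 0 < β ^ l.length := by positivity
    have hq : 2 * β ^ l.length ≤ β ^ (l.length + 1) := by
      rw [pow_succ']; gcongr
    by_cases h : i = a <;> simp [letterPoly, h] <;> constructor <;> linarith

/-- The leading digit is determined by the value at `β`, because the remaining digits contribute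
less than the leading power of `β`. -/
lemma letterPoly_cons_eq {β : ℝ} (hβ : 2 ≤ β) {a i j : Fin 4} {l m : List (Fin 4)}
    (hlen : l.length = m.length)
    (h : aeval β (letterPoly a (i :: l)) = aeval β (letterPoly a (j :: m))) :
    (i = a ↔ j = a) ∧ aeval β (letterPoly a l) = aeval β (letterPoly a m) := by
  obtain ⟨h0, h1⟩ := letterPoly_bounds hβ a l
  obtain ⟨h2, h3⟩ := letterPoly_bounds hβ a m
  rw [hlen] at h1
  by_cases hi : i = a <;> by_cases hj : j = a <;> simp [letterPoly, hi, hj, hlen] at h ⊢ <;>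
    linarith

lemma eq_of_letterPoly_eq {β : ℝ} (hβ : 2 ≤ β) (l m : List (Fin 4))
    (hlen : l.length = m.length)
    (h : ∀ a : Fin 4, a ≠ 0 → aeval β (letterPoly a l) = aeval β (letterPoly a m)) : l = m := by
  induction l generalizing m with
  | nil => exact (List.length_eq_zero_iff.mp hlen.symm).symm
  | cons i l ih =>
    cases m with
    | nil => simp at hlen
    | cons j m =>
      have hlen' : l.length = m.length := by simpa using hlen
      have key := fun a ha => letterPoly_cons_eq hβ hlen' (h a ha)
      have hij : i = j := by
        by_cases hi : i = 0
        · by_cases hj : j = 0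
          · rw [hi, hj]
          · exact (key j hj).1.mpr rfl
        · exact ((key i hi).1.mp rfl).symm
      rw [hij, ih m hlen' fun a ha => (key a ha).2]

lemma pow_mul_comp_zero {β : ℝ} (hβ : β ≠ 0) (s t : ℝ) (l : List (Fin 4)) :
    β ^ l.length * (l.map (phiMap β s t)).foldr (· ∘ ·) id 0 =
      aeval β (letterPoly 1 l) + aeval β (letterPoly 2 l) * s + aeval β (letterPoly 3 l) * t := by
  induction l with
  | nil => simp [letterPoly]
  | cons i l ih =>
    simp only [List.map_cons, List.foldr_cons, Function.comp_apply, List.length_cons, pow_succ]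
    generalize (l.map (phiMap β s t)).foldr (· ∘ ·) id 0 = y at ih ⊢
    fin_cases i <;> simp [letterPoly, phiMap] <;> field_simp <;> linear_combination ih

/-- if s, t ∉ ℚ_β and Φ_{β,s,t} has exact overlaps, then
s = (f(β)/g(β))·t + h(β)/g(β) for some integer polynomials f, g, h with
f(β) ≠ 0 and g(β) ≠ 0. -/
theorem stmt3 (β s t : ℝ) (hβ : 2 ≤ β) (hs : s ∉ Qbeta β) (ht : t ∉ Qbeta β)
    (hov : HasExactOverlaps β s t) :
    ∃ f g h : Polynomial ℤ, aeval β f ≠ 0 ∧ aeval β g ≠ 0 ∧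
      s = (aeval β f / aeval β g) * t + aeval β h / aeval β g := by
  obtain ⟨n, -, i, j, hij, heq⟩ := hov
  have hβ0 : β ≠ 0 := by linarith
  have hi := pow_mul_comp_zero hβ0 s t (List.ofFn i)
  have hj := pow_mul_comp_zero hβ0 s t (List.ofFn j)
  have h0 := congrFun heq 0
  simp only [phiWord] at h0
  simp only [List.map_ofFn, List.length_ofFn, Function.comp_def] at hi hj
  simp only [Function.comp_def] at h0
  rw [h0, hj] at hi
  set D : Fin 4 → ℤ[X] := fun a => letterPoly a (List.ofFn i) - letterPoly a (List.ofFn j) with hD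
  have hDa : ∀ a, aeval β (D a) =
      aeval β (letterPoly a (List.ofFn i)) - aeval β (letterPoly a (List.ofFn j)) := by
    intro a; simp [hD]
  have rel : aeval β (D 1) + aeval β (D 2) * s + aeval β (D 3) * t = 0 := by
    rw [hDa, hDa, hDa]; linear_combination -hi
  by_cases h2 : aeval β (D 2) = 0
  · exfalso
    by_cases h3 : aeval β (D 3) = 0
    · have h1 : aeval β (D 1) = 0 := by simpa [h2, h3] using rel
      refine hij (List.ofFn_injective (eq_of_letterPoly_eq hβ _ _ (by simp) fun a ha => ?_))
      rw [← sub_eq_zero, ← hDa]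
      fin_cases a
      · exact absurd rfl ha
      · exact h1
      · exact h2
      · exact h3
    · refine ht ⟨-D 1, D 3, h3, ?_⟩
      rw [eq_div_iff h3, map_neg]
      rw [h2] at rel
      linear_combination rel
  · by_cases h3 : aeval β (D 3) = 0
    · refine absurd ⟨-D 1, D 2, h2, ?_⟩ hs
      rw [eq_div_iff h2, map_neg]
      rw [h3] at rel
      linear_combination rel
    · refine ⟨-D 3, D 2, -D 1, by simpa using h3, h2, ?_⟩
      rw [map_neg, map_neg]
      field_simp
      linear_combination rel
end

section
/- For any real algebraic number ξ there exists M > 0, depending only on ξ, such that for all natural numbers n and H ≥ 1 and every polynomial f with integer coefficients of degree at most n whose coefficients all have absolute value at most H, if f(ξ) ≠ 0 then |f(ξ)| ≥ M^{−n} H^{−M}. -/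
open Polynomial

/-!
The bound is Liouville's inequality in norm form. Let `K = ℚ(ξ)` and let `a ≠ 0` be an integer such
that `a ξ` is integral. If `f ∈ P(n, H)` and `f(ξ) ≠ 0`, then `x = a ^ n f(ξ)` is a nonzero algebraic
integer of `K`, so the product of `|σ x|` over all complex embeddings `σ` of `K` is at least `1`
(`one_le_prod_norm_embeddings`). Each factor is at most `C ^ n H`, where `C` depends only on `ξ`
(`norm_aeval_le`, using `n + 1 ≤ 2 ^ n`), so the factor of the real embedding `ξ ↦ ξ`, which is
`|a| ^ n |f(ξ)|`, is at least `(C ^ n H) ^ (-m)` with `m = [K : ℚ]`. The lemma follows with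
`M = C ^ (m + 1) + m`.
-/

/-- P(n,H): integer polynomials of degree at most n with all coefficients
bounded in absolute value by H. -/
def PolySet (n H : ℕ) : Set (Polynomial ℤ) :=
  {f : Polynomial ℤ | f.natDegree ≤ n ∧ ∀ k, |f.coeff k| ≤ (H : ℤ)}

/-- Clearing denominators: multiplying `f(α)` by `a ^ n` homogenizes `f`, so only powers of the
integral element `a α` occur. -/
lemma isIntegral_pow_mul_aeval {K : Type*} [Field K] {α : K} {a : ℤ}
    (ha : IsIntegral ℤ ((a : K) * α)) {n : ℕ} {f : ℤ[X]} (hf : f.natDegree ≤ n) :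
    IsIntegral ℤ ((a : K) ^ n * aeval α f) := by
  rw [aeval_eq_sum_range' (Nat.lt_succ_of_le hf), Finset.mul_sum]
  refine IsIntegral.sum _ fun k hk => ?_
  have hk' : k ≤ n := Nat.lt_succ_iff.mp (Finset.mem_range.mp hk)
  have key : (a : K) ^ n * (f.coeff k • α ^ k)
      = ((f.coeff k * a ^ (n - k) : ℤ) : K) * ((a : K) * α) ^ k := by
    rw [zsmul_eq_mul, ← Nat.sub_add_cancel hk', pow_add, Nat.sub_add_cancel hk']
    push_cast
    ring
  rw [key]
  exact (isIntegral_algebraMap (R := ℤ) (A := K) (x := f.coeff k * a ^ (n - k))).mul (ha.pow k)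

lemma norm_aeval_le {z : ℂ} {B : ℝ} (hB : 1 ≤ B) (hz : ‖z‖ ≤ B) {n H : ℕ} {f : ℤ[X]}
    (hf : f ∈ PolySet n H) : ‖aeval z f‖ ≤ (2 * B) ^ n * H := by
  rw [aeval_eq_sum_range' (Nat.lt_succ_of_le hf.1)]
  have hterm : ∀ k ∈ Finset.range (n + 1), ‖f.coeff k • z ^ k‖ ≤ H * B ^ n := by
    intro k hk
    have hk' : k ≤ n := Nat.lt_succ_iff.mp (Finset.mem_range.mp hk)
    rw [zsmul_eq_mul, norm_mul, norm_pow, Complex.norm_intCast]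
    have h1 : |(f.coeff k : ℝ)| ≤ H := by exact_mod_cast hf.2 k
    have h2 : ‖z‖ ^ k ≤ B ^ n :=
      (pow_le_pow_left₀ (norm_nonneg z) hz k).trans (pow_le_pow_right₀ hB hk')
    exact mul_le_mul h1 h2 (by positivity) (by positivity)
  refine (norm_sum_le_of_le _ hterm).trans ?_
  have h2 : ((n + 1 : ℕ) : ℝ) ≤ 2 ^ n := by exact_mod_cast Nat.lt_two_pow_self (n := n)
  rw [Finset.sum_const, Finset.card_range, nsmul_eq_mul, mul_pow]
  calc ((n + 1 : ℕ) : ℝ) * (H * B ^ n) ≤ 2 ^ n * (H * B ^ n) := by gcongr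
    _ = 2 ^ n * B ^ n * H := by ring

/-- The product is the absolute value of the norm of `x`, which is a nonzero rational integer. -/
lemma one_le_prod_norm_embeddings {K : Type*} [Field K] [NumberField K] {x : K}
    (hx : IsIntegral ℤ x) (hx0 : x ≠ 0) : 1 ≤ ∏ σ : K →ₐ[ℚ] ℂ, ‖σ x‖ := by
  obtain ⟨z, hz⟩ := IsIntegrallyClosed.isIntegral_iff.mp (Algebra.isIntegral_norm ℚ hx)
  have hz0 : z ≠ 0 := by
    rintro rfl
    exact hx0 (Algebra.norm_eq_zero_iff.mp (hz.symm.trans (map_zero _)))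
  have h := Algebra.norm_eq_prod_embeddings ℚ ℂ x
  rw [← norm_prod, ← h, ← hz]
  simpa using (by exact_mod_cast Int.one_le_abs hz0 : (1 : ℝ) ≤ |(z : ℝ)|)

/-- Garsia-type lemma: for any real algebraic ξ there is M > 0,
depending only on ξ, such that for all n, H ≥ 1 and every f ∈ P(n,H) with
f(ξ) ≠ 0 one has |f(ξ)| ≥ M^{−n} H^{−M}. -/
theorem stmt4 (ξ : ℝ) (hξ : IsAlgebraic ℤ ξ) :
    ∃ M : ℝ, 0 < M ∧ ∀ (n H : ℕ), 1 ≤ H → ∀ f ∈ PolySet n H,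
      aeval ξ f ≠ 0 → M ^ (-(n : ℝ)) * (H : ℝ) ^ (-M) ≤ |aeval ξ f| := by
  classical
  have hξQ : IsIntegral ℚ ξ := (hξ.extendScalars (Int.cast_injective (α := ℚ))).isIntegral
  let K := IntermediateField.adjoin ℚ {ξ}
  have : FiniteDimensional ℚ K := IntermediateField.adjoin.finiteDimensional hξQ
  have : NumberField K := ⟨⟩
  let α : K := IntermediateField.AdjoinSimple.gen ℚ ξ
  have hαξ : algebraMap K ℝ α = ξ := IntermediateField.AdjoinSimple.algebraMap_gen ℚ ξ
  have hα : IsAlgebraic ℤ α := by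
    rw [← isAlgebraic_algebraMap_iff (algebraMap K ℝ).injective, hαξ]
    exact hξ
  obtain ⟨a, ha0, ha⟩ := hα.exists_integral_multiple
  rw [zsmul_eq_mul] at ha
  let σ₀ : K →ₐ[ℚ] ℂ := (Complex.ofRealAm.restrictScalars ℚ).comp K.val
  let m := Fintype.card (K →ₐ[ℚ] ℂ)
  -- `B` is a common bound for the conjugates of `ξ`, chosen at least `1`.
  let B : ℝ := 1 + ∑ σ : K →ₐ[ℚ] ℂ, ‖σ α‖
  have hB : 1 ≤ B := le_add_of_nonneg_right (Finset.sum_nonneg fun _ _ => norm_nonneg _)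
  have hσB : ∀ σ : K →ₐ[ℚ] ℂ, ‖σ α‖ ≤ B := fun σ =>
    (Finset.single_le_sum (f := fun σ : K →ₐ[ℚ] ℂ => ‖σ α‖) (fun _ _ => norm_nonneg _)
      (Finset.mem_univ σ)).trans (le_add_of_nonneg_left zero_le_one)
  have ha1 : (1 : ℝ) ≤ |(a : ℝ)| := by exact_mod_cast Int.one_le_abs ha0
  let C : ℝ := |(a : ℝ)| * (2 * B)
  have haC : |(a : ℝ)| ≤ C := le_mul_of_one_le_right (by positivity) (by linarith)
  have hC : 1 ≤ C := ha1.trans haC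
  have hM : 0 < C ^ (m + 1) + m := by positivity
  -- The base `M` needs `M ≥ C ^ (m + 1)` and the exponent needs `M ≥ m`.
  refine ⟨C ^ (m + 1) + m, hM, fun n H hH f hf hf0 => ?_⟩
  have hH1 : (1 : ℝ) ≤ H := by exact_mod_cast hH
  let x : K := (a : K) ^ n * aeval α f
  have hσx : ∀ σ : K →ₐ[ℚ] ℂ, ‖σ x‖ = |(a : ℝ)| ^ n * ‖aeval (σ α) f‖ := by
    intro σ
    have : σ (aeval α f) = aeval (σ α) f :=
      (aeval_algHom_apply (σ.restrictScalars ℤ) α f).symm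
    simp only [x, map_mul, map_pow, map_intCast, norm_mul, norm_pow, this, Complex.norm_intCast]
  have hσ₀ : ‖aeval (σ₀ α) f‖ = |aeval ξ f| := by
    have h1 : σ₀ α = algebraMap ℝ ℂ ξ := congrArg (algebraMap ℝ ℂ) hαξ
    rw [h1, aeval_algebraMap_apply]
    simp
  have hx0 : x ≠ 0 := by
    intro h
    have := hσx σ₀
    rw [h, map_zero, norm_zero, hσ₀] at this
    have h3 : 0 < |(a : ℝ)| ^ n * |aeval ξ f| := by positivity
    linarith
  have hprod := one_le_prod_norm_embeddings (isIntegral_pow_mul_aeval ha hf.1) hx0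
  have hle : ∀ σ : K →ₐ[ℚ] ℂ, ‖σ x‖ ≤ C ^ n * H := by
    intro σ
    rw [hσx, mul_pow, mul_assoc]
    gcongr
    exact norm_aeval_le hB (hσB σ) hf
  have hD : 1 ≤ C ^ n * (H : ℝ) := one_le_mul_of_one_le_of_one_le (one_le_pow₀ hC) hH1
  have hmain : 1 ≤ (C ^ n * |aeval ξ f|) * (C ^ n * H) ^ m := by
    rw [← Finset.mul_prod_erase _ _ (Finset.mem_univ σ₀)] at hprod
    refine hprod.trans (mul_le_mul ?_ ?_ (by positivity) (by positivity))
    · rw [hσx, hσ₀]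
      gcongr
    · refine (Finset.prod_le_prod (fun _ _ => norm_nonneg _) fun σ _ => hle σ).trans ?_
      rw [Finset.prod_const]
      exact pow_le_pow_right₀ hD (Finset.card_le_univ _)
  clear_value C m
  have hHpos : (0 : ℝ) < H := by linarith
  have hMn : (C ^ (m + 1)) ^ n ≤ (C ^ (m + 1) + m : ℝ) ^ n := by
    gcongr
    simp
  have hHM : (H : ℝ) ^ m ≤ (H : ℝ) ^ (C ^ (m + 1) + m : ℝ) := by
    rw [← Real.rpow_natCast]
    refine Real.rpow_le_rpow_of_exponent_le hH1 ?_
    linarith [pow_pos (zero_lt_one.trans_le hC) (m + 1)]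
  rw [Real.rpow_neg hM.le, Real.rpow_neg hHpos.le, Real.rpow_natCast, ← mul_inv]
  refine inv_le_of_inv_le₀ (by positivity) ?_
  rw [inv_le_iff_one_le_mul₀ (by positivity)]
  calc (1 : ℝ) ≤ (C ^ n * |aeval ξ f|) * (C ^ n * H) ^ m := hmain
    _ = ((C ^ (m + 1)) ^ n * H ^ m) * |aeval ξ f| := by ring
    _ ≤ _ := by gcongr
end

section
/- Let β ≥ 2 be a real algebraic number and let M > 0 be a constant such that for all natural numbers n, H ≥ 1 and every f ∈ P(n,H) with f(β) ≠ 0 one has |f(β)| ≥ M^{−n} H^{−M}. Let (a_n)_{n≥1} be a sequence with a_n ∈ P_β for every n, and let p_k, q_k be the convergent numerators and denominators of [a_1, a_2, …]. Suppose that for every k ≥ 1 there is a natural number d_k ≥ 1 and polynomials P_k, Q_k ∈ P(d_k, d_k) with P_k(β) = p_k and Q_k(β) = q_k, and that a_{k+1} ≥ M^{k d_k} d_k^M. Then [a_1, a_2, …] ∉ ℚ_β, i.e. the limit of p_k/q_k cannot be written as f(β)/g(β) with f, g ∈ ℤ[x] and g(β) ≠ 0. -/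
/-!
If `x = f(β)/g(β)`, then `F_k = g P_k - f Q_k` is an integer polynomial of degree `d_k + O(1)` and
height `O(d_k)`, and `F_k(β) = g(β) (p_k - x q_k)`. The classical estimate
`|p_k - x q_k| ≤ 1 / q_{k+1}` (`abs_cfP_sub_le`) bounds it above, and the lower bound assumed for
polynomial values at `β` bounds it below as soon as it is nonzero. Together with
`q_{k+1} ≥ a_{k+1} q_k` and the growth of `a_{k+1}`, this bounds `q_k` by a constant not depending
on `k`. As `q_k ≥ k`, this is absurd for large `k`; and `F_k(β)`, `F_{k+1}(β)` cannot both vanish,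
because `p_k q_{k+1} - p_{k+1} q_k = ±1`.
-/


open Filter Polynomial

/-- Convergent numerators: p₀ = 0, p₁ = 1, p_k = a_k p_{k−1} + p_{k−2}. -/
noncomputable def cfP (a : ℕ → ℝ) : ℕ → ℝ
  | 0 => 0
  | 1 => 1
  | k + 2 => a (k + 2) * cfP a (k + 1) + cfP a k

/-- Convergent denominators: q₀ = 1, q₁ = a₁, q_k = a_k q_{k−1} + q_{k−2}. -/
noncomputable def cfQ (a : ℕ → ℝ) : ℕ → ℝ
  | 0 => 1
  | 1 => a 1
  | k + 2 => a (k + 2) * cfQ a (k + 1) + cfQ a k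

/-- P_β = {βⁿ : n ∈ ℕ}. -/
def Pbeta (β : ℝ) : Set ℝ := {x : ℝ | ∃ n : ℕ, x = β ^ n}

lemma one_le_cfQ {a : ℕ → ℝ} (ha : ∀ n, 1 ≤ n → 1 ≤ a n) (k : ℕ) :
    1 ≤ cfQ a k ∧ 1 ≤ cfQ a (k + 1) := by
  induction k with
  | zero => exact ⟨by simp [cfQ], by simpa [cfQ] using ha 1 le_rfl⟩
  | succ k ih =>
    refine ⟨ih.2, ?_⟩
    have h := ha (k + 2) (by omega)
    simp only [cfQ]
    nlinarith [ih.1, ih.2]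

lemma natCast_le_cfQ {a : ℕ → ℝ} (ha : ∀ n, 1 ≤ n → 1 ≤ a n) (k : ℕ) :
    ((k + 1 : ℕ) : ℝ) ≤ cfQ a (k + 1) := by
  induction k with
  | zero => simpa [cfQ] using ha 1 le_rfl
  | succ k ih =>
    have h := ha (k + 2) (by omega)
    have h1 := one_le_cfQ ha k
    simp only [cfQ]
    push_cast at ih ⊢
    nlinarith [h1.1, h1.2]

lemma abs_det_eq_one (a : ℕ → ℝ) (k : ℕ) :
    |cfP a k * cfQ a (k + 1) - cfP a (k + 1) * cfQ a k| = 1 := by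
  induction k with
  | zero => simp [cfP, cfQ]
  | succ k ih =>
    rw [← ih, ← abs_neg]
    simp only [cfP, cfQ]
    congr 1
    ring

/-- For fixed `k`, both `|p_k q_m - p_m q_k| q_{k+1}` and `q_m` are controlled by the same
recursion in `m`, so it suffices to compare them at `m = k` and `m = k + 1`. -/
lemma abs_cross_le {a : ℕ → ℝ} (ha : ∀ n, 1 ≤ n → 1 ≤ a n) (k j : ℕ) :
    |cfP a k * cfQ a (k + j) - cfP a (k + j) * cfQ a k| * cfQ a (k + 1) ≤ cfQ a (k + j) ∧
    |cfP a k * cfQ a (k + j + 1) - cfP a (k + j + 1) * cfQ a k| * cfQ a (k + 1)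
      ≤ cfQ a (k + j + 1) := by
  induction j with
  | zero =>
    refine ⟨?_, ?_⟩
    · simpa using (zero_le_one.trans (one_le_cfQ ha k).1)
    · rw [add_zero, abs_det_eq_one, one_mul]
  | succ j ih =>
    refine ⟨ih.2, ?_⟩
    have h := ha (k + j + 2) (by omega)
    have hq := (one_le_cfQ ha k).2
    have key : |cfP a k * cfQ a (k + j + 2) - cfP a (k + j + 2) * cfQ a k| ≤
        a (k + j + 2) * |cfP a k * cfQ a (k + j + 1) - cfP a (k + j + 1) * cfQ a k| +
        |cfP a k * cfQ a (k + j) - cfP a (k + j) * cfQ a k| := by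
      have e : cfP a k * cfQ a (k + j + 2) - cfP a (k + j + 2) * cfQ a k =
          a (k + j + 2) * (cfP a k * cfQ a (k + j + 1) - cfP a (k + j + 1) * cfQ a k) +
          (cfP a k * cfQ a (k + j) - cfP a (k + j) * cfQ a k) := by
        simp only [cfP, cfQ]
        ring
      rw [e]
      refine (abs_add_le _ _).trans ?_
      rw [abs_mul, abs_of_nonneg (by linarith : 0 ≤ a (k + j + 2))]
    have h2 := mul_le_mul_of_nonneg_right key (by linarith : 0 ≤ cfQ a (k + 1))
    have h3 := mul_le_mul_of_nonneg_left ih.2 (by linarith : 0 ≤ a (k + j + 2))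
    have e2 : cfQ a (k + j + 2) = a (k + j + 2) * cfQ a (k + j + 1) + cfQ a (k + j) := rfl
    change |cfP a k * cfQ a (k + j + 2) - cfP a (k + j + 2) * cfQ a k| * cfQ a (k + 1)
      ≤ cfQ a (k + j + 2)
    linarith [ih.1]

lemma abs_cfP_sub_le {a : ℕ → ℝ} (ha : ∀ n, 1 ≤ n → 1 ≤ a n) {x : ℝ}
    (hx : Tendsto (fun m => cfP a m / cfQ a m) atTop (nhds x)) (k : ℕ) :
    |cfP a k - x * cfQ a k| * cfQ a (k + 1) ≤ 1 := by
  have hlim : Tendsto (fun m => |cfP a k - cfP a m / cfQ a m * cfQ a k| * cfQ a (k + 1)) atTop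
      (nhds (|cfP a k - x * cfQ a k| * cfQ a (k + 1))) :=
    ((tendsto_const_nhds.sub (hx.mul_const _)).abs).mul_const _
  refine le_of_tendsto hlim ?_
  filter_upwards [eventually_ge_atTop k] with m hm
  obtain ⟨j, rfl⟩ := Nat.exists_eq_add_of_le hm
  have hq : 0 < cfQ a (k + j) := zero_lt_one.trans_le (one_le_cfQ ha (k + j)).1
  have e : cfP a k - cfP a (k + j) / cfQ a (k + j) * cfQ a k =
      (cfP a k * cfQ a (k + j) - cfP a (k + j) * cfQ a k) / cfQ a (k + j) := by
    field_simp
  rw [e, abs_div, abs_of_pos hq, div_mul_eq_mul_div, div_le_one hq]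
  exact (abs_cross_le ha k j).1

/-- Multiplication by a fixed polynomial enlarges heights by at most a constant factor. -/
lemma exists_height_mul_le (g : Polynomial ℤ) :
    ∃ C : ℕ, ∀ (P : Polynomial ℤ) (H : ℕ), (∀ k, |P.coeff k| ≤ (H : ℤ)) →
      ∀ k, |(g * P).coeff k| ≤ (C : ℤ) * H := by
  induction g using Polynomial.induction_on' with
  | add p q hp hq =>
    obtain ⟨C, hC⟩ := hp
    obtain ⟨D, hD⟩ := hq
    refine ⟨C + D, fun P H hP k => ?_⟩
    rw [add_mul, coeff_add]
    push_cast
    linarith [abs_add_le ((p * P).coeff k) ((q * P).coeff k), hC P H hP k, hD P H hP k]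
  | monomial n c =>
    refine ⟨c.natAbs, fun P H hP k => ?_⟩
    rw [← C_mul_X_pow_eq_monomial, mul_assoc, coeff_C_mul, coeff_X_pow_mul', abs_mul,
      Int.natCast_natAbs]
    refine mul_le_mul_of_nonneg_left ?_ (abs_nonneg _)
    split_ifs
    · exact hP _
    · simp

lemma exists_combination_mem_polySet (f g : Polynomial ℤ) :
    ∃ c C : ℕ, 1 ≤ C ∧ ∀ (n H : ℕ), ∀ P ∈ PolySet n H, ∀ Q ∈ PolySet n H,
      g * P - f * Q ∈ PolySet (c + n) (C * H) := by
  obtain ⟨C, hC⟩ := exists_height_mul_le g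
  obtain ⟨D, hD⟩ := exists_height_mul_le f
  refine ⟨g.natDegree + f.natDegree, C + D + 1, by omega, fun n H P hP Q hQ => ⟨?_, fun k => ?_⟩⟩
  · have h1 := natDegree_mul_le (p := g) (q := P)
    have h2 := natDegree_mul_le (p := f) (q := Q)
    have h3 := natDegree_sub_le (g * P) (f * Q)
    have h4 := hP.1
    have h5 := hQ.1
    omega
  · rw [coeff_sub]
    push_cast
    have h : (0 : ℤ) ≤ H := by positivity
    linarith [abs_sub ((g * P).coeff k) ((f * Q).coeff k), hC P H hP.2 k, hD Q H hQ.2 k]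

/-- let β ≥ 2 be algebraic and M > 0 a Garsia-type constant for β.
If a_n ∈ P_β for all n ≥ 1, the convergent numerators and denominators p_k, q_k
are values at β of polynomials in P(d_k, d_k) with d_k ≥ 1, and
a_{k+1} ≥ M^{k d_k} d_k^M for all k ≥ 1, then the value of the continued
fraction [a₁, a₂, …] is not in ℚ_β. -/
theorem stmt5 (β : ℝ) (hβ : 2 ≤ β) (halg : IsAlgebraic ℤ β) (M : ℝ) (hM : 0 < M)
    (hGarsia : ∀ (n H : ℕ), 1 ≤ H → ∀ f ∈ PolySet n H,
      aeval β f ≠ 0 → M ^ (-(n : ℝ)) * (H : ℝ) ^ (-M) ≤ |aeval β f|)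
    (a : ℕ → ℝ) (ha : ∀ n, 1 ≤ n → a n ∈ Pbeta β)
    (d : ℕ → ℕ) (hd : ∀ k, 1 ≤ k → 1 ≤ d k)
    (hpoly : ∀ k, 1 ≤ k → ∃ P ∈ PolySet (d k) (d k), ∃ Q ∈ PolySet (d k) (d k),
      aeval β P = cfP a k ∧ aeval β Q = cfQ a k)
    (hgrow : ∀ k, 1 ≤ k → M ^ (k * d k) * (d k : ℝ) ^ M ≤ a (k + 1))
    (x : ℝ) (hx : Tendsto (fun m => cfP a m / cfQ a m) atTop (nhds x)) :
    x ∉ Qbeta β := by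
  rintro ⟨f, g, hg, hxfg⟩
  have ha1 : ∀ n, 1 ≤ n → 1 ≤ a n := by
    intro n hn
    obtain ⟨m, hm⟩ := ha n hn
    rw [hm]
    exact one_le_pow₀ (by linarith)
  -- The constant polynomial `1`, viewed as an element of `P(1,1)`, forces `1 ≤ M`.
  have hM1 : 1 ≤ M := by
    have h := hGarsia 1 1 le_rfl 1 ⟨by simp, fun k => by
      rw [coeff_one]; split_ifs <;> simp⟩ (by simp)
    simp only [Nat.cast_one, Real.one_rpow, mul_one, map_one, abs_one, Real.rpow_neg_one] at h
    exact (inv_le_one₀ hM).1 h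
  obtain ⟨c, C, hC, hcomb⟩ := exists_combination_mem_polySet f g
  have hCpos : (0 : ℝ) < C := by exact_mod_cast hC
  set K : ℝ := |aeval β g| * (M ^ c * (C : ℝ) ^ M) with hK
  have main : ∀ k : ℕ, 1 ≤ k → K < k → cfP a k - x * cfQ a k = 0 := by
    intro k hk hKk
    by_contra hne
    obtain ⟨P, hP, Q, hQ, hPv, hQv⟩ := hpoly k hk
    have hval : aeval β (g * P - f * Q) = aeval β g * (cfP a k - x * cfQ a k) := by
      rw [map_sub, map_mul, map_mul, hPv, hQv, hxfg]
      field_simp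
    have hdk := hd k hk
    have hdpos : (0 : ℝ) < d k := by exact_mod_cast hdk
    have hlow := hGarsia (c + d k) (C * d k) (Nat.mul_pos hC hdk) _ (hcomb _ _ P hP Q hQ)
      (by rw [hval]; exact mul_ne_zero hg hne)
    rw [hval, abs_mul, Real.rpow_neg hM.le, Real.rpow_natCast, Nat.cast_mul,
      Real.rpow_neg (by positivity), Real.mul_rpow hCpos.le hdpos.le, ← mul_inv, pow_add] at hlow
    have hup := abs_cfP_sub_le ha1 hx k
    have hq1 : 0 < cfQ a (k + 1) := zero_lt_one.trans_le (one_le_cfQ ha1 k).2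
    have hdM : 0 < (d k : ℝ) ^ M := Real.rpow_pos_of_pos hdpos _
    have hCM : 0 < (C : ℝ) ^ M := Real.rpow_pos_of_pos hCpos _
    have hMc : 0 < M ^ c := pow_pos hM _
    have hMd : 0 < M ^ d k := pow_pos hM _
    have hqle : cfQ a (k + 1) ≤ K * (M ^ d k * (d k : ℝ) ^ M) := by
      have h1 := mul_le_mul_of_nonneg_right hlow hq1.le
      have h2 := mul_le_mul_of_nonneg_left hup (abs_nonneg (aeval β g))
      have h3 : (M ^ c * M ^ d k * ((C : ℝ) ^ M * (d k : ℝ) ^ M))⁻¹ * cfQ a (k + 1)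
          ≤ |aeval β g| := by linarith
      rw [inv_mul_le_iff₀ (by positivity)] at h3
      rw [hK]
      linarith
    have hqk : (k : ℝ) ≤ cfQ a k := by
      obtain ⟨j, rfl⟩ := Nat.exists_eq_add_of_le' hk
      exact natCast_le_cfQ ha1 j
    have hqge : a (k + 1) * cfQ a k ≤ cfQ a (k + 1) := by
      obtain ⟨j, rfl⟩ := Nat.exists_eq_add_of_le' hk
      change _ ≤ a (j + 2) * cfQ a (j + 1) + cfQ a j
      exact le_add_of_nonneg_right (zero_le_one.trans (one_le_cfQ ha1 j).1)
    have hage : M ^ d k * (d k : ℝ) ^ M ≤ a (k + 1) :=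
      (mul_le_mul_of_nonneg_right
        (pow_le_pow_right₀ hM1 (Nat.le_mul_of_pos_left _ hk)) hdM.le).trans (hgrow k hk)
    have hpos : 0 < M ^ d k * (d k : ℝ) ^ M := mul_pos hMd hdM
    have h4 := mul_le_mul_of_nonneg_right hage ((Nat.cast_nonneg k).trans hqk)
    have h5 := mul_lt_mul_of_pos_right (hKk.trans_le hqk) hpos
    linarith
  obtain ⟨k, hk⟩ := exists_nat_gt K
  have e1 := main (k + 1) (by omega) (by push_cast; linarith)
  have e2 := main (k + 2) (by omega) (by push_cast; linarith)
  have hdet := abs_det_eq_one a (k + 1)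
  rw [sub_eq_zero.1 e1, sub_eq_zero.1 e2] at hdet
  ring_nf at hdet
  simp at hdet
end

section
/- Let β ≥ 2 be a real algebraic number, let k ≥ 1, let a_1, …, a_k ∈ P_β, and let n ≥ 1. Then there exist a_{k+1} ∈ P_β and a constant c > 0 (depending only on a_1, …, a_{k+1} and n) such that for every s ∈ C[a_1, …, a_{k+1}] and all polynomials f, g ∈ P(n, n) with g(β) ≠ 0 one has |s − f(β)/g(β)| ≥ c. -/
/-!
The set `F` of all quotients `f(β)/g(β)` with `f, g ∈ P(n, n)` is finite. Let `x = p_k / q_k` be the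
convergent determined by `a_1, …, a_k`. Every `s ∈ C[a_1, …, a_k, a']` satisfies
`1 / (C q_k) ≤ |s - x| ≤ 1 / (a' q_k)` with `C = q_{k+1} + q_k` (`dist_convergent_bounds`), so `s`
stays away from `x` itself, and for `a'` large it is close enough to `x` to stay away from the
finitely many elements of `F` other than `x`.

The two-sided bound comes from `r_i = (-1)^k (p_{k+i} q_k - p_k q_{k+i})`, which obeys the same
recurrence as `q_{k+i}` with `r_0 = 0`, `r_1 = 1` and satisfies
`|p_{k+i}/q_{k+i} - x| = r_i / (q_{k+i} q_k)`: comparing the initial values and using `a_j ≥ 1`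
gives `a' r_i ≤ q_{k+i} ≤ C r_i` for `i ≥ 1`.
-/

open Filter Polynomial

/-- C[a₁, …, a_k]: the set of values [a₁, …, a_k, a_{k+1}, …] of continued
fractions whose first k partial quotients are a₁, …, a_k and whose later
partial quotients all lie in P_β. -/
def CFSet (β : ℝ) (k : ℕ) (a : ℕ → ℝ) : Set ℝ :=
  {x : ℝ | ∃ b : ℕ → ℝ, (∀ j, 1 ≤ j → j ≤ k → b j = a j) ∧ (∀ j, k < j → b j ∈ Pbeta β) ∧
    Tendsto (fun m => cfP b m / cfQ b m) atTop (nhds x)}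

theorem polySet_finite (n H : ℕ) : (PolySet n H).Finite := by
  have hfin : (Set.univ.pi fun _ : Fin (n + 1) => Set.Icc (-(H : ℤ)) H).Finite :=
    Set.Finite.pi fun _ => Set.finite_Icc _ _
  refine Set.Finite.of_injOn (f := fun (p : ℤ[X]) (i : Fin (n + 1)) => p.coeff i) ?_ ?_ hfin
  · intro p hp i _
    exact abs_le.mp (hp.2 i)
  · intro p hp q hq h
    ext j
    by_cases hj : j < n + 1
    · exact congrFun h ⟨j, hj⟩
    · have hp' := hp.1
      have hq' := hq.1
      rw [coeff_eq_zero_of_natDegree_lt (by omega), coeff_eq_zero_of_natDegree_lt (by omega)]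

theorem cf_congr (a b : ℕ → ℝ) (m : ℕ) (h : ∀ j, 1 ≤ j → j ≤ m → b j = a j) :
    cfP b m = cfP a m ∧ cfQ b m = cfQ a m := by
  induction m using Nat.strong_induction_on with
  | _ m ih =>
    match m with
    | 0 => simp [cfP, cfQ]
    | 1 => simp [cfP, cfQ, h 1 le_rfl le_rfl]
    | m + 2 =>
      have h1 := ih (m + 1) (by omega) fun j hj hjm => h j hj (by omega)
      have h0 := ih m (by omega) fun j hj hjm => h j hj (by omega)
      simp [cfP, cfQ, h (m + 2) (by omega) le_rfl, h0.1, h0.2, h1.1, h1.2]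

theorem one_le_cfQ_s6 (b : ℕ → ℝ) (hb : ∀ j, 1 ≤ j → 1 ≤ b j) (m : ℕ) : 1 ≤ cfQ b m := by
  induction m using Nat.strong_induction_on with
  | _ m ih =>
    match m with
    | 0 => simp [cfQ]
    | 1 => simpa [cfQ] using hb 1 le_rfl
    | m + 2 =>
      have h1 := ih (m + 1) (by omega)
      have h0 := ih m (by omega)
      have h2 := hb (m + 2) (by omega)
      simp only [cfQ]
      nlinarith

theorem cf_det (b : ℕ → ℝ) (m : ℕ) :
    cfP b (m + 1) * cfQ b m - cfP b m * cfQ b (m + 1) = (-1) ^ m := by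
  induction m with
  | zero => simp [cfP, cfQ]
  | succ m ih =>
    simp only [cfP, cfQ] at ih ⊢
    rw [pow_succ, ← ih]
    ring

/-- The sequence `r_i = (-1)^k (p_{k+i} q_k - p_k q_{k+i})`. -/
noncomputable def crossDiff (b : ℕ → ℝ) (k i : ℕ) : ℝ :=
  (-1) ^ k * (cfP b (k + i) * cfQ b k - cfP b k * cfQ b (k + i))

theorem crossDiff_zero (b : ℕ → ℝ) (k : ℕ) : crossDiff b k 0 = 0 := by
  simp [crossDiff, mul_comm]

theorem crossDiff_one (b : ℕ → ℝ) (k : ℕ) : crossDiff b k 1 = 1 := by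
  rw [crossDiff, cf_det, ← mul_pow]
  simp

theorem crossDiff_add_two (b : ℕ → ℝ) (k i : ℕ) :
    crossDiff b k (i + 2) = b (k + i + 2) * crossDiff b k (i + 1) + crossDiff b k i := by
  have eP : cfP b (k + (i + 2)) = b (k + i + 2) * cfP b (k + (i + 1)) + cfP b (k + i) := rfl
  have eQ : cfQ b (k + (i + 2)) = b (k + i + 2) * cfQ b (k + (i + 1)) + cfQ b (k + i) := rfl
  rw [crossDiff, crossDiff, crossDiff, eP, eQ]
  ring

theorem one_le_crossDiff (b : ℕ → ℝ) (hb : ∀ j, 1 ≤ j → 1 ≤ b j) (k i : ℕ) :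
    0 ≤ crossDiff b k i ∧ 1 ≤ crossDiff b k (i + 1) := by
  induction i with
  | zero => simp [crossDiff_zero, crossDiff_one]
  | succ i ih =>
    have h2 := hb (k + i + 2) (by omega)
    refine ⟨by linarith, ?_⟩
    rw [crossDiff_add_two]
    nlinarith

theorem mul_crossDiff_le (b : ℕ → ℝ) (hb : ∀ j, 1 ≤ j → 1 ≤ b j) (k i : ℕ) :
    b (k + 1) * crossDiff b k i ≤ cfQ b (k + i) ∧
      b (k + 1) * crossDiff b k (i + 1) ≤ cfQ b (k + (i + 1)) := by
  induction i with
  | zero =>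
    have h0 := one_le_cfQ_s6 b hb k
    refine ⟨by simp [crossDiff_zero]; linarith, ?_⟩
    rw [zero_add, crossDiff_one, mul_one]
    match k with
    | 0 => simp [cfQ]
    | k + 1 =>
      have h1 := one_le_cfQ_s6 b hb k
      have h2 := hb (k + 2) (by omega)
      simp only [cfQ]
      nlinarith
  | succ i ih =>
    refine ⟨ih.2, ?_⟩
    have h2 := hb (k + i + 2) (by omega)
    have e : cfQ b (k + (i + 1 + 1)) = b (k + i + 2) * cfQ b (k + (i + 1)) + cfQ b (k + i) := rfl
    rw [crossDiff_add_two, e]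
    nlinarith [mul_le_mul_of_nonneg_left ih.2 (zero_le_one.trans h2)]

theorem cfQ_le_mul_crossDiff (b : ℕ → ℝ) (hb : ∀ j, 1 ≤ j → 1 ≤ b j) (k i : ℕ) :
    cfQ b (k + (i + 1)) ≤ (cfQ b (k + 1) + cfQ b k) * crossDiff b k (i + 1) ∧
      cfQ b (k + (i + 2)) ≤ (cfQ b (k + 1) + cfQ b k) * crossDiff b k (i + 2) := by
  have e (i : ℕ) :
      cfQ b (k + (i + 2)) = b (k + i + 2) * cfQ b (k + (i + 1)) + cfQ b (k + i) := rfl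
  induction i with
  | zero =>
    have h0 := one_le_cfQ_s6 b hb k
    have h2 := hb (k + 0 + 2) (by omega)
    refine ⟨by simp [crossDiff_one]; linarith, ?_⟩
    rw [crossDiff_add_two, e, crossDiff_zero, zero_add, crossDiff_one, add_zero k] at *
    nlinarith
  | succ i ih =>
    refine ⟨ih.2, ?_⟩
    have h2 := hb (k + (i + 1) + 2) (by omega)
    have h3 := mul_le_mul_of_nonneg_left ih.2 (zero_le_one.trans h2)
    rw [crossDiff_add_two, e (i + 1), mul_add, mul_left_comm]
    exact add_le_add h3 ih.1

theorem abs_convergent_sub (b : ℕ → ℝ) (hb : ∀ j, 1 ≤ j → 1 ≤ b j) (k i : ℕ) :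
    |cfP b (k + i) / cfQ b (k + i) - cfP b k / cfQ b k| =
      crossDiff b k i / (cfQ b (k + i) * cfQ b k) := by
  have h0 := one_le_cfQ_s6 b hb k
  have h1 := one_le_cfQ_s6 b hb (k + i)
  have hr := (one_le_crossDiff b hb k i).1
  rw [div_sub_div _ _ (by positivity) (by positivity), abs_div,
    abs_of_pos (show 0 < cfQ b (k + i) * cfQ b k by positivity), ← abs_of_nonneg hr, crossDiff,
    abs_mul, abs_pow]
  simp [mul_comm]

/-- Both bounds depend on `b_1, …, b_{k+1}` only, and the upper one tends to `0` as `b_{k+1} → ∞`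
with `b_1, …, b_k` fixed. -/
theorem dist_convergent_bounds (b : ℕ → ℝ) (hb : ∀ j, 1 ≤ j → 1 ≤ b j) (k : ℕ) (s : ℝ)
    (hs : Tendsto (fun m => cfP b m / cfQ b m) atTop (nhds s)) :
    1 / ((cfQ b (k + 1) + cfQ b k) * cfQ b k) ≤ |s - cfP b k / cfQ b k| ∧
      |s - cfP b k / cfQ b k| ≤ 1 / (b (k + 1) * cfQ b k) := by
  have hlim : Tendsto (fun i => |cfP b (k + (i + 1)) / cfQ b (k + (i + 1)) - cfP b k / cfQ b k|)
      atTop (nhds |s - cfP b k / cfQ b k|) := by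
    have := ((tendsto_add_atTop_iff_nat (k + 1)).mpr hs).sub_const (cfP b k / cfQ b k) |>.abs
    refine this.congr fun i => ?_
    rw [show i + (k + 1) = k + (i + 1) by ring]
  have h0 := one_le_cfQ_s6 b hb k
  have hq := one_le_cfQ_s6 b hb (k + 1)
  have hb1 := hb (k + 1) (by omega)
  constructor
  · refine ge_of_tendsto' hlim fun i => ?_
    have h1 := one_le_cfQ_s6 b hb (k + (i + 1))
    rw [abs_convergent_sub b hb, div_le_div_iff₀ (by positivity) (by positivity)]
    nlinarith [mul_le_mul_of_nonneg_right (cfQ_le_mul_crossDiff b hb k i).1 (zero_le_one.trans h0)]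
  · refine le_of_tendsto' hlim fun i => ?_
    have h1 := one_le_cfQ_s6 b hb (k + (i + 1))
    rw [abs_convergent_sub b hb, div_le_div_iff₀ (by positivity) (by positivity)]
    nlinarith [mul_le_mul_of_nonneg_right (mul_crossDiff_le b hb k i).2 (zero_le_one.trans h0)]

theorem exists_gap (F : Set ℝ) (hF : F.Finite) (x : ℝ) :
    ∃ δ > 0, ∀ y ∈ F, y ≠ x → δ ≤ |y - x| := by
  have hmem : (F \ {x})ᶜ ∈ nhds x := (hF.sdiff).isClosed.isOpen_compl.mem_nhds (by simp)
  obtain ⟨δ, hδ, hball⟩ := Metric.mem_nhds_iff.mp hmem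
  refine ⟨δ, hδ, fun y hy hyx => ?_⟩
  by_contra! hlt
  exact hball (show y ∈ Metric.ball x δ by simpa [Real.dist_eq] using hlt) ⟨hy, hyx⟩

theorem one_le_of_mem_Pbeta {β : ℝ} (hβ : 2 ≤ β) {x : ℝ} (hx : x ∈ Pbeta β) : 1 ≤ x := by
  obtain ⟨m, rfl⟩ := hx
  exact one_le_pow₀ (by linarith)

/-- given algebraic β ≥ 2, k ≥ 1, a₁, …, a_k ∈ P_β and n ≥ 1,
there exist a_{k+1} ∈ P_β and c > 0 (depending only on a₁, …, a_{k+1}, n) such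
that every s ∈ C[a₁, …, a_{k+1}] satisfies |s − f(β)/g(β)| ≥ c for all
f, g ∈ P(n,n) with g(β) ≠ 0. -/
theorem stmt6 (β : ℝ) (hβ : 2 ≤ β) (halg : IsAlgebraic ℤ β)
    (k : ℕ) (hk : 1 ≤ k) (a : ℕ → ℝ) (ha : ∀ j, 1 ≤ j → j ≤ k → a j ∈ Pbeta β)
    (n : ℕ) (hn : 1 ≤ n) :
    ∃ a' ∈ Pbeta β, ∃ c : ℝ, 0 < c ∧
      ∀ s ∈ CFSet β (k + 1) (Function.update a (k + 1) a'),
        ∀ f ∈ PolySet n n, ∀ g ∈ PolySet n n, aeval β g ≠ 0 →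
          c ≤ |s - aeval β f / aeval β g| := by
  have hF : (Set.image2 (fun f g : ℤ[X] => (aeval β f : ℝ) / aeval β g)
      (PolySet n n) (PolySet n n)).Finite := (polySet_finite n n).image2 _ (polySet_finite n n)
  obtain ⟨δ, hδ, hgap⟩ := exists_gap _ hF (cfP a k / cfQ a k)
  obtain ⟨N, hN⟩ := pow_unbounded_of_one_lt (2 / δ) (show 1 < β by linarith)
  have hNpos : 0 < β ^ N := by positivity
  set d := Function.update a (k + 1) (β ^ N) with hd
  have hd1 : ∀ j, 1 ≤ j → j ≤ k + 1 → 1 ≤ d j := by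
    intro j hj hjk
    by_cases h : j = k + 1
    · subst h
      simpa [hd] using one_le_of_mem_Pbeta hβ ⟨N, rfl⟩
    · rw [hd, Function.update_of_ne h]
      exact one_le_of_mem_Pbeta hβ (ha j hj (by omega))
  -- The sequence of ones beyond index `k + 1` makes the general positivity lemma applicable.
  have hdpos : ∀ m ≤ k + 1, 1 ≤ cfQ d m := by
    intro m hm
    rw [← (cf_congr d (fun j => if j ≤ k + 1 then d j else 1) m
      fun j _ hjm => if_pos (hjm.trans hm)).2]
    refine one_le_cfQ_s6 _ (fun j hj => ?_) m
    split_ifs with h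
    · exact hd1 j hj h
    · exact le_rfl
  have hq1 := hdpos (k + 1) le_rfl
  have hq0 := hdpos k (by omega)
  refine ⟨β ^ N, ⟨N, rfl⟩, min (δ / 2) (1 / ((cfQ d (k + 1) + cfQ d k) * cfQ d k)),
    lt_min (by positivity) (by positivity), ?_⟩
  rintro s ⟨b, hbd, hbP, hs⟩ f hf g hg -
  have hb : ∀ j, 1 ≤ j → 1 ≤ b j := by
    intro j hj
    by_cases h : j ≤ k + 1
    · rw [hbd j hj h]
      exact hd1 j hj h
    · exact one_le_of_mem_Pbeta hβ (hbP j (by omega))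
  obtain ⟨hlow, hupp⟩ := dist_convergent_bounds b hb k s hs
  have hbk := cf_congr d b k fun j hj hjk => hbd j hj (by omega)
  have hdk := cf_congr a d k fun j hj hjk => by
    rw [hd, Function.update_of_ne (by omega)]
  have hx : cfP b k / cfQ b k = cfP a k / cfQ a k := by
    rw [hbk.1, hbk.2, hdk.1, hdk.2]
  rw [hx, (cf_congr d b (k + 1) hbd).2, hbk.2] at hlow
  have hb1 : b (k + 1) = β ^ N := by
    rw [hbd (k + 1) (by omega) le_rfl, Function.update_self]
  rw [hx, hb1, hbk.2] at hupp
  have hclose : |s - cfP a k / cfQ a k| ≤ δ / 2 := by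
    refine hupp.trans ?_
    rw [div_lt_iff₀ hδ] at hN
    rw [div_le_div_iff₀ (by positivity) (by norm_num)]
    nlinarith [mul_pos hδ hNpos]
  by_cases hy : (aeval β f : ℝ) / aeval β g = cfP a k / cfQ a k
  · rw [hy]
    exact (min_le_right _ _).trans hlow
  · have hfar := hgap _ (Set.mem_image2_of_mem hf hg) hy
    have htri := abs_sub_le (aeval β f / aeval β g : ℝ) s (cfP a k / cfQ a k)
    rw [abs_sub_comm _ s] at htri
    exact (min_le_left _ _).trans (by linarith)
end

section
/- Let (a_n)_{n≥1} be a sequence of real numbers with a_n ≥ 1 for all n, and let p_k, q_k be the associated convergent numerators and denominators. Then all q_k are positive and the sequence of convergents p_k/q_k converges to a real limit. -/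
/-!
The determinant identity `p_{k+1} q_k - p_k q_{k+1} = (-1)^k` shows that consecutive convergents
differ in absolute value by `1 / (q_k q_{k+1})`. Since every partial quotient is at least `1`, the
denominators are positive and nondecreasing, so `q_{k+2} q_{k+1} ≥
(q_{k+1} + q_k) q_{k+1} ≥ 2 q_{k+1} q_k`, whence
`q_k q_{k+1} ≥ 2^k`. The convergents therefore form a Cauchy sequence, by comparison with a
geometric series of ratio `1/2`.
-/

open Filter Polynomial

lemma cfQ_pos_and_le (a : ℕ → ℝ) (ha : ∀ n, 1 ≤ n → 1 ≤ a n) (k : ℕ) :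
    0 < cfQ a k ∧ cfQ a k ≤ cfQ a (k + 1) := by
  induction k with
  | zero => simpa [cfQ] using ha 1 le_rfl
  | succ k ih =>
    obtain ⟨h0, h1⟩ := ih
    have h2 := ha (k + 2) (by omega)
    refine ⟨h0.trans_le h1, ?_⟩
    rw [cfQ]
    nlinarith

lemma cfP_mul_cfQ_sub (a : ℕ → ℝ) (k : ℕ) :
    cfP a (k + 1) * cfQ a k - cfP a k * cfQ a (k + 1) = (-1) ^ k := by
  induction k with
  | zero => simp [cfP, cfQ]
  | succ k ih =>
    rw [cfP, cfQ, pow_succ, ← ih]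
    ring

lemma two_pow_le_cfQ_mul (a : ℕ → ℝ) (ha : ∀ n, 1 ≤ n → 1 ≤ a n) (k : ℕ) :
    2 ^ k ≤ cfQ a k * cfQ a (k + 1) := by
  induction k with
  | zero => simpa [cfQ] using ha 1 le_rfl
  | succ k ih =>
    obtain ⟨h0, h1⟩ := cfQ_pos_and_le a ha k
    have h2 := ha (k + 2) (by omega)
    have h3 : cfQ a (k + 1) + cfQ a k ≤ cfQ a (k + 2) := by
      rw [cfQ]
      nlinarith
    rw [pow_succ]
    nlinarith

/-- if a_n ≥ 1 for all n ≥ 1, then all the q_k are positive and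
the sequence of convergents p_k/q_k converges to a real limit. -/
theorem stmt9 (a : ℕ → ℝ) (ha : ∀ n, 1 ≤ n → 1 ≤ a n) :
    (∀ k, 0 < cfQ a k) ∧
      ∃ x : ℝ, Tendsto (fun m => cfP a m / cfQ a m) atTop (nhds x) := by
  have hpos : ∀ k, 0 < cfQ a k := fun k => (cfQ_pos_and_le a ha k).1
  refine ⟨hpos, cauchySeq_tendsto_of_complete ?_⟩
  refine cauchySeq_of_le_geometric (1 / 2) 1 (by norm_num) fun k => ?_
  have h0 := hpos k
  have h1 := hpos (k + 1)
  have hdiff : cfP a (k + 1) / cfQ a (k + 1) - cfP a k / cfQ a k =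
      (-1) ^ k / (cfQ a k * cfQ a (k + 1)) := by
    rw [← cfP_mul_cfQ_sub a k]
    field_simp
  rw [dist_comm, Real.dist_eq, hdiff, abs_div, abs_pow, abs_neg, abs_one, one_pow,
    abs_of_pos (mul_pos h0 h1), one_mul, one_div_pow]
  exact one_div_le_one_div_of_le (by positivity) (two_pow_le_cfQ_mul a ha k)
end
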